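/- arXiv:1805.02571 — 2 statements merged into one kernel-verified Lean document; each statement's English description precedes it below -/
import Mathlib

section
/- Let (X, d) be a pseudometric space in which all distances are at most π. Let p : ℕ₊ → X be a sequence, and let N : ℕ₊ → ℝ be a sequence of positive real numbers converging to a limit L > 0. Assume that for all positive integers m and j one has N_m ≤ N_{jm} and cos( d(p_m, p_{jm}) ) ≥ N_m / N_{jm}. Then (p_m) is a Cauchy sequence for d, i.e. for every ε > 0 there exists M such that d(p_m, p_{m'}) < ε for all m, m' ≥ M. -/
open Filter

/-!
A distance `d ≤ π` with `c ≤ cos d` satisfies `d ≤ arccos c`, so `p m` lies within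
`arccos (N m / N n)` of `p n` whenever `n` refines `m` (for `ℕ+`: `m ∣ n`). Since `N m / N n → 1`,
this is uniformly small for large `m`, and any two points far out in the sequence are both
close to the point at a common refinement of their indices.
-/

theorem le_arccos_of_le_cos {x c : ℝ} (hx : x ≤ Real.pi) (hc : c ≤ Real.cos x) :
    x ≤ Real.arccos c := by
  rcases le_total 0 x with hx₀ | hx₀
  · calc
      x = Real.arccos (Real.cos x) := (Real.arccos_cos hx₀ hx).symm
      _ ≤ Real.arccos c := Real.antitone_arccos hc
  · exact hx₀.trans (Real.arccos_nonneg c)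

theorem tendsto_arccos_div_prod_self {ι : Type*} {l : Filter ι} {N : ι → ℝ} {L : ℝ} (hL : L ≠ 0)
    (hN : Tendsto N l (nhds L)) :
    Tendsto (fun x : ι × ι => Real.arccos (N x.1 / N x.2)) (l ×ˢ l) (nhds 0) := by
  have hdiv : Tendsto (fun x : ι × ι => N x.1 / N x.2) (l ×ˢ l) (nhds 1) := by
    rw [← div_self hL]
    exact (hN.comp tendsto_fst).div (hN.comp tendsto_snd) hL
  rw [← Real.arccos_one]
  exact (Real.continuous_arccos.tendsto 1).comp hdiv

theorem cauchy_map_of_eventually_forall_dist_lt {X ι : Type*} [PseudoMetricSpace X] {l : Filter ι}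
    [l.NeBot] {r : ι → ι → Prop} {p : ι → X} (hr : ∀ m n, ∃ k, r m k ∧ r n k)
    (hp : ∀ ε > 0, ∀ᶠ m in l, ∀ k, r m k → dist (p m) (p k) < ε) :
    Cauchy (map p l) := by
  refine cauchy_map_iff'.2 (Metric.uniformity_basis_dist.tendsto_right_iff.2 ?_)
  intro ε hε
  filter_upwards [(hp (ε / 2) (half_pos hε)).prod_mk (hp (ε / 2) (half_pos hε))]
    with ⟨m, n⟩ ⟨hm, hn⟩
  obtain ⟨k, hmk, hnk⟩ := hr m n
  calc
    dist (p m) (p n) ≤ dist (p m) (p k) + dist (p n) (p k) := dist_triangle_right _ _ _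
    _ < ε / 2 + ε / 2 := add_lt_add (hm k hmk) (hn k hnk)
    _ = ε := add_halves ε

theorem cauchy_of_cos_dist_ge_general {X ι : Type*} [PseudoMetricSpace X] [Preorder ι] [Nonempty ι]
    {r : ι → ι → Prop} (hr : ∀ m n, ∃ k, r m k ∧ r n k) (hr_le : ∀ m n, r m n → m ≤ n)
    {p : ι → X} {N : ι → ℝ} {L : ℝ} (hL : L ≠ 0) (hN : Tendsto N atTop (nhds L))
    (hpi : ∀ m n, r m n → dist (p m) (p n) ≤ Real.pi)
    (hcos : ∀ m n, r m n → N m / N n ≤ Real.cos (dist (p m) (p n))) :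
    CauchySeq p := by
  have : IsDirectedOrder ι := ⟨fun m n =>
    (hr m n).imp fun k hk => ⟨hr_le m k hk.1, hr_le n k hk.2⟩⟩
  refine cauchy_map_of_eventually_forall_dist_lt hr fun ε hε => ?_
  obtain ⟨s, hs, harccos⟩ := eventually_prod_self_iff'.1
    ((tendsto_arccos_div_prod_self hL hN).eventually_lt_const hε)
  filter_upwards [eventually_forall_ge_atTop.2 hs] with m hm k hmk
  calc
    dist (p m) (p k) ≤ Real.arccos (N m / N k) :=
      le_arccos_of_le_cos (hpi m k hmk) (hcos m k hmk)
    _ < ε := harccos m (hm m le_rfl) k (hm k (hr_le m k hmk))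

/-- In a pseudometric space where all distances are at most `π`, a sequence
`p : ℕ₊ → X` is Cauchy provided there are positive norms `N m` converging to a
positive limit `L` with `N m ≤ N (j*m)` and `cos (dist (p m) (p (j*m))) ≥ N m / N (j*m)`. -/
theorem cauchy_of_cos_dist_ge {X : Type*} [PseudoMetricSpace X]
    (hbd : ∀ x y : X, dist x y ≤ Real.pi)
    (p : ℕ+ → X) (N : ℕ+ → ℝ) (L : ℝ) (hL : 0 < L)
    (hNpos : ∀ m, 0 < N m)
    (hNlim : Tendsto N atTop (nhds L))
    (hmono : ∀ m j : ℕ+, N m ≤ N (j * m))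
    (hcos : ∀ m j : ℕ+, N m / N (j * m) ≤ Real.cos (dist (p m) (p (j * m)))) :
    ∀ ε > 0, ∃ M : ℕ+, ∀ m m' : ℕ+, M ≤ m → M ≤ m' → dist (p m) (p m') < ε := by
  have hp : CauchySeq p := cauchy_of_cos_dist_ge_general (r := (· ∣ ·))
    (fun m n => ⟨m * n, dvd_mul_right m n, dvd_mul_left n m⟩) (fun _ _ => PNat.le_of_dvd)
    hL.ne' hNlim (fun m n _ => hbd (p m) (p n))
    (fun m _ ⟨j, hj⟩ => hj ▸ mul_comm j m ▸ hcos m j)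
  exact fun ε hε => (Metric.cauchySeq_iff.1 hp ε hε).imp fun M hM m m' hm hm' => hM m hm m' hm'
end

section
/- Let X be a topological space, let d and K be positive natural numbers, and let f : ℕ → X → ℝ be a family of functions such that f_k is continuous for every k. Assume that for every point x ∈ X there exists a real polynomial P_x of degree at most d such that f_k(x) = P_x(1/k) for every positive integer k divisible by K. Then the function x ↦ P_x(0), which equals the limit of f_k(x) as k → ∞ along multiples of K, is continuous on X. -/
open Polynomial

/-!
A polynomial of degree at most `d` is determined by its values at `d + 1` distinct nodes, and by
Lagrange interpolation its value at any point is a linear combination of these values, with weights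
depending only on the nodes. Because the degree bound is uniform in `x`, the same `d + 1` indices
`k` serve every `x`, so `x ↦ (P x).eval 0` is a fixed finite linear combination of the
functions `f k`.
-/

theorem eval_eq_sum_eval_mul_eval_lagrangeBasis {F ι : Type*} [Field F] [DecidableEq ι]
    {s : Finset ι} {v : ι → F} (hv : Set.InjOn v s) {p : Polynomial F} (hp : p.degree < s.card)
    (a : F) :
    p.eval a = ∑ i ∈ s, p.eval (v i) * (Lagrange.basis s v i).eval a := by
  conv_lhs => rw [Lagrange.eq_interpolate hv hp, Lagrange.interpolate_apply]
  simp only [eval_finsetSum, eval_mul, eval_C]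

theorem continuous_eval_of_continuous_eval_nodes {X F ι : Type*} [TopologicalSpace X] [Field F]
    [TopologicalSpace F] [IsTopologicalSemiring F] {s : Finset ι} {v : ι → F}
    (hv : Set.InjOn v s) {P : X → Polynomial F} (hdeg : ∀ x, (P x).degree < s.card)
    (hP : ∀ i ∈ s, Continuous fun x => (P x).eval (v i)) (a : F) :
    Continuous fun x => (P x).eval a := by
  classical
  simp only [fun x => eval_eq_sum_eval_mul_eval_lagrangeBasis hv (hdeg x) a]
  exact continuous_finsetSum s fun i hi => (hP i hi).mul continuous_const

theorem one_div_natCast_injective (F : Type*) [DivisionRing F] [CharZero F] :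
    Function.Injective fun k : ℕ => 1 / (k : F) :=
  fun _ _ h => by simpa only [one_div, inv_inj, Nat.cast_inj] using h

theorem infinite_setOf_dvd {K : ℕ} (hK : K ≠ 0) : {k : ℕ | K ∣ k}.Infinite :=
  Set.infinite_of_injective_forall_mem (mul_right_injective₀ hK) (Nat.dvd_mul_right K)

theorem continuous_of_eventually_polynomial_general {X F : Type*} [TopologicalSpace X] [Field F]
    [CharZero F] [TopologicalSpace F] [IsTopologicalSemiring F] {d : ℕ} {S : Set ℕ}
    (hS : S.Infinite) {f : ℕ → X → F} (hf : ∀ k ∈ S, Continuous (f k)) {P : X → Polynomial F}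
    (hdeg : ∀ x, (P x).degree ≤ d)
    (heq : ∀ x, ∀ k ∈ S, 0 < k → f k x = (P x).eval (1 / (k : F))) (a : F) :
    Continuous fun x => (P x).eval a := by
  obtain ⟨nodes, hnodes, hcard⟩ := (hS.sdiff (Set.finite_singleton 0)).exists_subset_card_eq (d + 1)
  have degree_lt_card (x : X) : (P x).degree < nodes.card := by
    rw [hcard]
    exact (hdeg x).trans_lt (WithBot.coe_lt_coe.2 d.lt_succ_self)
  refine continuous_eval_of_continuous_eval_nodes (one_div_natCast_injective F).injOn
    degree_lt_card (fun k hk => ?_) a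
  obtain ⟨hkS, hk0⟩ := hnodes hk
  exact (hf k hkS).congr fun x => heq x k hkS (Nat.pos_of_ne_zero hk0)

/-- If each `f k` is continuous and, for every `x`, there is a polynomial `P x`
of degree at most `d` with `f k x = (P x).eval (1/k)` for every positive `k`
divisible by `K`, then the pointwise limit `x ↦ (P x).eval 0` is continuous. -/
theorem continuous_of_eventually_polynomial {X : Type*} [TopologicalSpace X]
    (d K : ℕ) (hd : 0 < d) (hK : 0 < K)
    (f : ℕ → X → ℝ) (hf : ∀ k, Continuous (f k))
    (P : X → Polynomial ℝ)
    (hdeg : ∀ x, (P x).degree ≤ (d : ℕ))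
    (heq : ∀ x, ∀ k : ℕ, 0 < k → K ∣ k → f k x = (P x).eval (1 / (k : ℝ))) :
    Continuous (fun x => (P x).eval 0) := by
  exact continuous_of_eventually_polynomial_general (infinite_setOf_dvd hK.ne') (fun k _ => hf k)
    hdeg (fun x k hKk hk => heq x k hk hKk) 0
end
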